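/- Let k ≥ 1 and n = (8k+4)N + 1 for a positive integer N. Then there exists a set of mutually orthogonal cyclic (4k+2)-cycle systems of K_n of cardinality at least N/(96k+30) − 1 = (n−1)/((8k+4)(96k+30)) − 1. In particular, if n ≡ 1 (mod 2(4k+2)), then μ(4k+2,n) ≥ μ'(4k+2,n) ≥ (n−1)/((8k+4)(96k+30)) − 1. -/

import Mathlib

/-- The edge set of the closed walk through `f 0, f 1, …, f (ℓ-1), f 0`. -/
def cycleEdges {V : Type*} [DecidableEq V] (ℓ : ℕ) (f : Fin ℓ → V) : Finset (Sym2 V) :=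
  Finset.univ.image (fun i : Fin ℓ => s(f i, f ⟨(i.val + 1) % ℓ, Nat.mod_lt _ i.pos⟩))

/-- `E` is the edge set of an `ℓ`-cycle. -/
def IsCycle {V : Type*} [DecidableEq V] (ℓ : ℕ) (E : Finset (Sym2 V)) : Prop :=
  ∃ f : Fin ℓ → V, Function.Injective f ∧ E = cycleEdges ℓ f

/-- `F` is an `ℓ`-cycle system of the complete graph on `V`: a set of `ℓ`-cycles whose
edge sets partition the edge set of the complete graph. -/
def IsCycleSystem {V : Type*} [DecidableEq V] (ℓ : ℕ) (F : Set (Finset (Sym2 V))) : Prop :=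
  (∀ E ∈ F, IsCycle ℓ E) ∧
  F.Pairwise (fun E E' => Disjoint E E') ∧
  (∀ e : Sym2 V, ¬ e.IsDiag ↔ ∃ E ∈ F, e ∈ E)

/-- Two cycle systems are orthogonal when any two cycles, one from each,
share at most one edge. -/
def Orthog {V : Type*} [DecidableEq V] (F F' : Set (Finset (Sym2 V))) : Prop :=
  ∀ E ∈ F, ∀ E' ∈ F', (E ∩ E').card ≤ 1

/-- Translation of a cycle (given by its edge set) by `g ∈ ZMod n`. -/
def translateCycle {n : ℕ} (g : ZMod n) (E : Finset (Sym2 (ZMod n))) : Finset (Sym2 (ZMod n)) :=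
  E.image (Sym2.map (· + g))

/-- A cycle system of the complete graph on `ZMod n` is cyclic if closed under translation. -/
def IsCyclicSystem {n : ℕ} (F : Set (Finset (Sym2 (ZMod n)))) : Prop :=
  ∀ E ∈ F, ∀ g : ZMod n, translateCycle g E ∈ F

/-! The construction: cells `Lw j`, `4k+2-j` form a near-alpha labelling of the cycle, every cell is
blown up by `N`, and `y c` is the offset chosen in column `c`. -/

def Lw (k j : ℕ) : ℕ := if j = 0 then 0 else if j < k then j + 1 else j + 2

def pcol (k j : ℕ) : ℕ := if j = 0 then 2 * k else j - 1

def vert (k N : ℕ) (y : ℕ → ℕ) (p : ℕ) : ℕ :=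
  if p % 2 = 0 then Lw k (p / 2) * N + y (pcol k (p / 2))
  else (4 * k + 2 - p / 2) * N + y (pcol k (p / 2)) + y (p / 2)

def del (k p : ℕ) : ℕ :=
  if p = 0 then 4 * k + 2 else if p + 2 ≤ 2 * k then 4 * k + 1 - p
  else if p ≤ 4 * k then 4 * k - p else 2 * k + 2

def ecol (k p : ℕ) : ℕ := if p % 2 = 0 then p / 2 else pcol k (p / 2)

def lcol (k p : ℕ) : ℕ := if p % 2 = 0 then pcol k (p / 2) else p / 2

def Lo (k p : ℕ) : ℕ :=
  if p % 2 = 0 then Lw k (p / 2) else if p = 4 * k + 1 then 0 else Lw k (p / 2 + 1)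

/-- lower end of edge `p` -/
def low (k N : ℕ) (y : ℕ → ℕ) (p : ℕ) : ℕ := Lo k p * N + y (lcol k p)

/-- length of edge `p` -/
def dif (k N : ℕ) (y : ℕ → ℕ) (p : ℕ) : ℕ := del k p * N + y (ecol k p)

lemma edge_nat (k N : ℕ) (hk : 1 ≤ k) (y : ℕ → ℕ) (p : ℕ) (hp : p < 4 * k + 2) :
    s(vert k N y p, vert k N y ((p + 1) % (4 * k + 2))) =
      s(low k N y p, low k N y p + dif k N y p) := by
  rcases Nat.even_or_odd' p with ⟨j, rfl | rfl⟩
  · have h1 : (2 * j + 1) % (4 * k + 2) = 2 * j + 1 := Nat.mod_eq_of_lt (by omega)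
    have h2 : 2 * j % 2 = 0 := by omega
    have h3 : (2 * j + 1) % 2 = 1 := by omega
    have h4 : 2 * j / 2 = j := by omega
    have h5 : (2 * j + 1) / 2 = j := by omega
    have h6 : 4 * k + 2 - j = Lw k j + del k (2 * j) := by
      unfold Lw del; split_ifs <;> first | contradiction | omega
    simp only [h1, vert, low, dif, Lo, lcol, ecol, h2, h3, h4, h5, if_true, one_ne_zero, if_false, h6]
    congr 1; ring
  · have h3 : (2 * j + 1) % 2 = 1 := by omega
    have h5 : (2 * j + 1) / 2 = j := by omega
    by_cases hj : j = 2 * k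
    · subst hj
      have h1 : (2 * (2 * k) + 1 + 1) % (4 * k + 2) = 0 := by
        rw [show 2 * (2 * k) + 1 + 1 = 4 * k + 2 by ring]; simp
      have h6 : 4 * k + 2 - 2 * k = del k (2 * (2 * k) + 1) := by
        unfold del; split_ifs <;> first | contradiction | omega
      have h7 : 2 * (2 * k) + 1 = 4 * k + 1 := by ring
      rw [Sym2.eq_swap]
      simp only [h1, vert, low, dif, Lo, lcol, ecol, h3, h5, if_true, one_ne_zero, if_false, h6,
        Nat.zero_mod, Nat.zero_div]
      rw [if_pos h7]
      simp only [Lw, pcol, if_true]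
      congr 1; ring
    · have h1 : (2 * j + 1 + 1) % (4 * k + 2) = 2 * (j + 1) := Nat.mod_eq_of_lt (by omega)
      have h2 : 2 * (j + 1) % 2 = 0 := by omega
      have h4 : 2 * (j + 1) / 2 = j + 1 := by omega
      have h6 : 4 * k + 2 - j = Lw k (j + 1) + del k (2 * j + 1) := by
        unfold Lw del; split_ifs <;> first | contradiction | omega
      have h7 : ¬ (2 * j + 1 = 4 * k + 1) := by omega
      have h8 : pcol k (j + 1) = j := by simp [pcol]
      rw [Sym2.eq_swap]
      simp only [h1, vert, low, dif, Lo, lcol, ecol, h2, h3, h4, h5, if_true, one_ne_zero, if_false,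
        h6, h7, h8]
      congr 1; ring

lemma pcol_lt (k j : ℕ) (hj : j < 2 * k + 1) : pcol k j < 2 * k + 1 := by
  unfold pcol; split_ifs <;> first | contradiction | omega

lemma ecol_lt (k p : ℕ) (hp : p < 4 * k + 2) : ecol k p < 2 * k + 1 := by
  unfold ecol pcol; split_ifs <;> first | contradiction | omega

lemma lcol_lt (k p : ℕ) (hp : p < 4 * k + 2) : lcol k p < 2 * k + 1 := by
  unfold lcol pcol; split_ifs <;> first | contradiction | omega

lemma lcol_ne (k p q : ℕ) (hk : 1 ≤ k) (hp : p < 4 * k + 2) (hq : q < 4 * k + 2) (hpq : p ≠ q)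
    (h : ecol k p = ecol k q) : lcol k p ≠ lcol k q := by
  unfold ecol pcol at h; unfold lcol pcol; split_ifs at * <;> omega

lemma del_inj (k p q : ℕ) (hk : 1 ≤ k) (hp : p < 4 * k + 2) (hq : q < 4 * k + 2)
    (h : del k p = del k q) : p = q := by
  unfold del at h; split_ifs at h <;> first | contradiction | omega | simp_all

lemma del_cases (k p : ℕ) (hk : 1 ≤ k) (hp : p < 4 * k + 2) : del k p ≤ 4 * k ∨ del k p = 4 * k + 2 := by
  unfold del; split_ifs <;> first | contradiction | omega

lemma mulcmp (N a b x z : ℕ) (hx : x < N) (h : a < b) : a * N + x < b * N + z := by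
  have : (a + 1) * N ≤ b * N := Nat.mul_le_mul_right _ h
  nlinarith

lemma Lw_lt (k i j : ℕ) (h : i < j) : Lw k i < Lw k j := by
  unfold Lw; split_ifs <;> first | contradiction | omega

lemma vert_lt (k N : ℕ) (hk : 1 ≤ k) (y : ℕ → ℕ)
    (hy : ∀ c, c < 2 * k + 1 → 1 ≤ y c ∧ y c ≤ N) (p : ℕ) (hp : p < 4 * k + 2) :
    vert k N y p < (8 * k + 4) * N + 1 := by
  have a1 := hy _ (pcol_lt k (p / 2) (by omega))
  have a2 := hy (p / 2) (by omega)
  have hN : N ≤ k * N := Nat.le_mul_of_pos_left _ hk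
  unfold vert; split_ifs
  · have : Lw k (p / 2) ≤ 4 * k + 2 := by unfold Lw; split_ifs <;> first | contradiction | omega
    have := Nat.mul_le_mul_right N this
    nlinarith
  · have : 4 * k + 2 - p / 2 ≤ 4 * k + 2 := by omega
    have := Nat.mul_le_mul_right N this
    nlinarith

lemma vert_ne (k N : ℕ) (hk : 1 ≤ k) (y : ℕ → ℕ)
    (hy : ∀ c, c < 2 * k + 1 → 1 ≤ y c ∧ y c ≤ N) (p q : ℕ) (hp : p < 4 * k + 2)
    (hq : q < 4 * k + 2) (hpq : p < q) : vert k N y p ≠ vert k N y q := by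
  -- low against high
  have LH : ∀ i j, i < 2 * k + 1 → j < 2 * k + 1 →
      Lw k i * N + y (pcol k i) < (4 * k + 2 - j) * N + y (pcol k j) + y j := by
    intro i j hi hj
    have a1 := hy _ (pcol_lt k i hi)
    have a2 := hy _ (pcol_lt k j hj)
    have a3 := hy _ hj
    have h1 : Lw k i ≤ 2 * k + 2 := by unfold Lw; split_ifs <;> first | contradiction | omega
    rcases Nat.lt_or_ge (Lw k i) (4 * k + 2 - j) with h | h
    · have : (Lw k i + 1) * N ≤ (4 * k + 2 - j) * N := Nat.mul_le_mul_right _ h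
      nlinarith
    · have hj' : j = 2 * k := by omega
      have hi' : i = 2 * k := by
        subst hj'; unfold Lw at h; split_ifs at h <;> omega
      subst hj' hi'
      have : Lw k (2 * k) * N = (4 * k + 2 - 2 * k) * N := by congr 1; omega
      omega
  have a1 := hy _ (pcol_lt k (p / 2) (by omega))
  have a2 := hy (p / 2) (by omega)
  have a3 := hy _ (pcol_lt k (q / 2) (by omega))
  have a4 := hy (q / 2) (by omega)
  unfold vert
  split_ifs with h1 h2 h2
  · have h : Lw k (p / 2) + 1 ≤ Lw k (q / 2) := Lw_lt k _ _ (by omega)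
    have := Nat.mul_le_mul_right N h
    rw [Nat.add_mul] at this
    omega
  · exact (LH _ _ (by omega) (by omega)).ne
  · exact (LH _ _ (by omega) (by omega)).ne'
  · rcases Nat.lt_or_ge (p / 2 + 1) (q / 2) with h | h
    · have h : (4 * k + 2 - q / 2) + 2 ≤ (4 * k + 2 - p / 2) := by omega
      have := Nat.mul_le_mul_right N h
      rw [Nat.add_mul] at this
      omega
    · have h3 : q / 2 = p / 2 + 1 := by omega
      have h4 : pcol k (q / 2) = p / 2 := by rw [h3]; simp [pcol]
      have h : (4 * k + 2 - q / 2) + 1 ≤ (4 * k + 2 - p / 2) := by omega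
      have := Nat.mul_le_mul_right N h
      rw [Nat.add_mul] at this
      rw [h4]
      omega

lemma cast_inj_lt {n a b : ℕ} (ha : a < n) (hb : b < n) (h : (a : ZMod n) = b) : a = b := by
  rw [ZMod.natCast_eq_natCast_iff'] at h
  rwa [Nat.mod_eq_of_lt ha, Nat.mod_eq_of_lt hb] at h

lemma cell_eq (N a b x z : ℕ) (hx : 1 ≤ x ∧ x ≤ N) (hz : 1 ≤ z ∧ z ≤ N)
    (h : a * N + x = b * N + z) : a = b ∧ x = z := by
  have : a = b := by
    rcases Nat.lt_trichotomy a b with h1 | h1 | h1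
    · have := Nat.mul_le_mul_right N (show a + 1 ≤ b from h1)
      rw [Nat.add_mul] at this; omega
    · exact h1
    · have := Nat.mul_le_mul_right N (show b + 1 ≤ a from h1)
      rw [Nat.add_mul] at this; omega
  subst this
  exact ⟨rfl, by omega⟩

lemma dif_bd (k N : ℕ) (hk : 1 ≤ k) (y : ℕ → ℕ)
    (hy : ∀ c, c < 2 * k + 1 → 1 ≤ y c ∧ y c ≤ N) (p : ℕ) (hp : p < 4 * k + 2) :
    0 < dif k N y p ∧ dif k N y p ≤ (4 * k + 3) * N := by
  have a := hy _ (ecol_lt k p hp)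
  have h : del k p ≤ 4 * k + 2 := by rcases del_cases k p hk hp with h | h <;> omega
  have := Nat.mul_le_mul_right N h
  unfold dif
  constructor
  · omega
  · nlinarith

lemma dif_eq (k N n : ℕ) (hk : 1 ≤ k) (hN : 0 < N) (hn : n = (8 * k + 4) * N + 1) (y z : ℕ → ℕ)
    (hy : ∀ c, c < 2 * k + 1 → 1 ≤ y c ∧ y c ≤ N) (hz : ∀ c, c < 2 * k + 1 → 1 ≤ z c ∧ z c ≤ N)
    (p q : ℕ) (hp : p < 4 * k + 2) (hq : q < 4 * k + 2)
    (h : (dif k N y p : ZMod n) = dif k N z q) : p = q ∧ y (ecol k p) = z (ecol k p) := by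
  have b1 := dif_bd k N hk y hy p hp
  have b2 := dif_bd k N hk z hz q hq
  have h' := cast_inj_lt (by nlinarith) (by nlinarith) h
  obtain ⟨h1, h2⟩ := cell_eq N _ _ _ _ (hy _ (ecol_lt k p hp)) (hz _ (ecol_lt k q hq)) h'
  have h3 := del_inj k p q hk hp hq h1
  subst h3
  exact ⟨rfl, h2⟩

lemma dif_ne_neg (k N n : ℕ) (hk : 1 ≤ k) (hN : 0 < N) (hn : n = (8 * k + 4) * N + 1) (y z : ℕ → ℕ)
    (hy : ∀ c, c < 2 * k + 1 → 1 ≤ y c ∧ y c ≤ N) (hz : ∀ c, c < 2 * k + 1 → 1 ≤ z c ∧ z c ≤ N)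
    (p q : ℕ) (hp : p < 4 * k + 2) (hq : q < 4 * k + 2) :
    (dif k N y p : ZMod n) ≠ - dif k N z q := by
  intro h
  have b1 := dif_bd k N hk y hy p hp
  have b2 := dif_bd k N hk z hz q hq
  have h0 : ((dif k N y p + dif k N z q : ℕ) : ZMod n) = 0 := by
    push_cast; rw [h]; ring
  rw [ZMod.natCast_eq_zero_iff] at h0
  obtain ⟨m, hm⟩ := h0
  have hkN : N ≤ k * N := Nat.le_mul_of_pos_left _ hk
  have m1 : m < 2 := by
    by_contra hc
    have := Nat.mul_le_mul_left n (show 2 ≤ m by omega)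
    nlinarith
  have m0 : m ≠ 0 := by rintro rfl; omega
  have m2 : m = 1 := by omega
  subst m2
  have a1 := hy _ (ecol_lt k p hp)
  have a2 := hz _ (ecol_lt k q hq)
  unfold dif at hm
  set s := del k p + del k q with hs
  set x := y (ecol k p)
  set w := z (ecol k q)
  have hm' : s * N + (x + w) = (8 * k + 4) * N + 1 := by
    rw [hs]; nlinarith
  have e1 : s < 8 * k + 4 := by
    by_contra hc
    have := Nat.mul_le_mul_right N (show 8 * k + 4 ≤ s by omega)
    omega
  have e2 : s ≠ 8 * k + 3 := by
    rcases del_cases k p hk hp with h | h <;> rcases del_cases k q hk hq with h' | h' <;> omega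
  have := Nat.mul_le_mul_right N (show s + 2 ≤ 8 * k + 4 by omega)
  rw [Nat.add_mul] at this
  omega

/-- the offset in column `c` of the starter cycle `r` of system `i` -/
def yv (N i r c : ℕ) : ℕ := (r + c * i) % N + 1

lemma yv_bd (N i r c : ℕ) (hN : 0 < N) : 1 ≤ yv N i r c ∧ yv N i r c ≤ N := by
  have := Nat.mod_lt (r + c * i) hN
  unfold yv; omega

lemma yv_inj (N i r r' c : ℕ) (hr : r < N) (hr' : r' < N) (h : yv N i r c = yv N i r' c) : r = r' := by
  unfold yv at h
  have h1 : r + c * i ≡ r' + c * i [MOD N] := by unfold Nat.ModEq; omega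
  have h2 := Nat.ModEq.add_right_cancel' _ h1
  exact Nat.ModEq.eq_of_lt_of_lt h2 hr hr'

lemma key_dvd (k N i i' c c' : ℕ) (hc : c < 2 * k + 1) (hc' : c' < 2 * k + 1) (hcc : c ≠ c')
    (hi : 2 * k * (i + 1) ≤ N) (hi' : 2 * k * (i' + 1) ≤ N)
    (h : (N : ℤ) ∣ ((c : ℤ) - c') * ((i : ℤ) - i')) : i = i' := by
  by_contra hne
  have hpos : (0 : ℤ) < |((c : ℤ) - c') * ((i : ℤ) - i')| := by
    apply abs_pos.mpr
    apply mul_ne_zero <;> omega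
  have hle : (N : ℤ) ≤ |((c : ℤ) - c') * ((i : ℤ) - i')| :=
    Int.le_of_dvd hpos ((dvd_abs _ _).mpr h)
  rw [abs_mul] at hle
  have h1 : |(c : ℤ) - c'| ≤ 2 * k := by rw [abs_le]; omega
  have h2 : |(i : ℤ) - i'| ≤ max i i' := by rw [abs_le]; omega
  have h3 : |(c : ℤ) - c'| * |(i : ℤ) - i'| ≤ (2 * k) * (max i i') :=
    mul_le_mul h1 h2 (abs_nonneg _) (by positivity)
  have hk : 0 < k := by omega
  have h4 : 2 * k * (max i i' + 1) ≤ N := by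
    rcases max_choice i i' with h | h <;> rw [h] <;> assumption
  have h5 : (2 * (k : ℤ)) * (((max i i' : ℕ) : ℤ) + 1) ≤ N := by exact_mod_cast h4
  have hk' : (0 : ℤ) < k := by exact_mod_cast hk
  nlinarith

lemma yv_int (N i r c : ℕ) : ∃ m : ℤ, (yv N i r c : ℤ) = r + c * i + 1 + N * m := by
  refine ⟨-((r + c * i) / N : ℕ), ?_⟩
  have := Nat.mod_add_div (r + c * i) N
  unfold yv
  zify at this
  push_cast at this ⊢
  linarith

/-- two columns determine the system -/
lemma yv_key (k N i i' r r' c c' : ℕ) (hc : c < 2 * k + 1) (hc' : c' < 2 * k + 1) (hcc : c ≠ c')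
    (hi : 2 * k * (i + 1) ≤ N) (hi' : 2 * k * (i' + 1) ≤ N)
    (h : yv N i r c + yv N i' r' c' = yv N i' r' c + yv N i r c') : i = i' := by
  apply key_dvd k N i i' c c' hc hc' hcc hi hi'
  obtain ⟨m1, h1⟩ := yv_int N i r c
  obtain ⟨m2, h2⟩ := yv_int N i' r' c'
  obtain ⟨m3, h3⟩ := yv_int N i' r' c
  obtain ⟨m4, h4⟩ := yv_int N i r c'
  zify at h
  refine ⟨m3 + m4 - m1 - m2, ?_⟩
  rw [h1, h2, h3, h4] at h
  linear_combination h

/-- the translate by `g` of the starter cycle `r` of system `i` -/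
def cyc (k N n i r : ℕ) (g : ZMod n) : Finset (Sym2 (ZMod n)) :=
  cycleEdges (4 * k + 2) (fun p : Fin (4 * k + 2) => (vert k N (yv N i r) p : ZMod n) + g)

lemma mem_cyc (k N n i r : ℕ) (hk : 1 ≤ k) (g : ZMod n) (e : Sym2 (ZMod n)) :
    e ∈ cyc k N n i r g ↔ ∃ p < 4 * k + 2,
      e = s((low k N (yv N i r) p : ZMod n) + g,
        (low k N (yv N i r) p : ZMod n) + g + (dif k N (yv N i r) p : ZMod n)) := by
  have key : ∀ p < 4 * k + 2, s((vert k N (yv N i r) p : ZMod n) + g,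
      (vert k N (yv N i r) ((p + 1) % (4 * k + 2)) : ZMod n) + g) =
      s((low k N (yv N i r) p : ZMod n) + g,
        (low k N (yv N i r) p : ZMod n) + g + (dif k N (yv N i r) p : ZMod n)) := by
    intro p hp
    have := congrArg (Sym2.map (fun a : ℕ => (a : ZMod n) + g)) (edge_nat k N hk (yv N i r) p hp)
    simp only [Sym2.map_mk] at this
    rw [this]
    congr 1
    push_cast; ring
  unfold cyc cycleEdges
  simp only [Finset.mem_image, Finset.mem_univ, true_and]
  constructor
  · rintro ⟨p, rfl⟩
    exact ⟨p, p.2, key p p.2⟩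
  · rintro ⟨p, hp, rfl⟩
    exact ⟨⟨p, hp⟩, key p hp⟩

/-- the cyclic system number `i` -/
def sysF (k N n i : ℕ) : Set (Finset (Sym2 (ZMod n))) :=
  {E | ∃ r < N, ∃ g : ZMod n, E = cyc k N n i r g}

lemma share (k N n : ℕ) (hk : 1 ≤ k) (hN : 0 < N) (hn : n = (8 * k + 4) * N + 1)
    (i i' r r' p q : ℕ) (hp : p < 4 * k + 2) (hq : q < 4 * k + 2) (g g' : ZMod n)
    (h : s((low k N (yv N i r) p : ZMod n) + g,
        (low k N (yv N i r) p : ZMod n) + g + (dif k N (yv N i r) p : ZMod n)) =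
      s((low k N (yv N i' r') q : ZMod n) + g',
        (low k N (yv N i' r') q : ZMod n) + g' + (dif k N (yv N i' r') q : ZMod n))) :
    p = q ∧ yv N i r (ecol k p) = yv N i' r' (ecol k p) ∧
      (yv N i r (lcol k p) : ZMod n) + g = (yv N i' r' (lcol k p) : ZMod n) + g' := by
  have hy : ∀ i r c, c < 2 * k + 1 → 1 ≤ yv N i r c ∧ yv N i r c ≤ N :=
    fun i r c _ => yv_bd N i r c hN
  rw [Sym2.eq_iff] at h
  rcases h with ⟨h1, h2⟩ | ⟨h1, h2⟩
  · rw [h1] at h2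
    obtain ⟨rfl, h3⟩ := dif_eq k N n hk hN hn _ _ (hy i r) (hy i' r') p q hp hq (add_left_cancel h2)
    refine ⟨rfl, h3, ?_⟩
    unfold low at h1
    push_cast at h1
    linear_combination h1
  · exfalso
    apply dif_ne_neg k N n hk hN hn _ _ (hy i r) (hy i' r') p q hp hq
    linear_combination h2 - h1

lemma orth (k N n : ℕ) (hk : 1 ≤ k) (hN : 0 < N) (hn : n = (8 * k + 4) * N + 1) (i i' : ℕ)
    (hi : 2 * k * (i + 1) ≤ N) (hi' : 2 * k * (i' + 1) ≤ N) (hii : i ≠ i') :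
    Orthog (sysF k N n i) (sysF k N n i') := by
  rintro E ⟨r, hr, g, rfl⟩ E' ⟨r', hr', g', rfl⟩
  rw [Finset.card_le_one]
  intro e he e' he'
  rw [Finset.mem_inter, mem_cyc _ _ _ _ _ hk, mem_cyc _ _ _ _ _ hk] at he he'
  obtain ⟨⟨p, hp, rfl⟩, q, hq, h1⟩ := he
  obtain ⟨⟨p', hp', rfl⟩, q', hq', h2⟩ := he'
  obtain ⟨rfl, a1, b1⟩ := share k N n hk hN hn i i' r r' _ _ hp hq g g' h1
  obtain ⟨rfl, a2, b2⟩ := share k N n hk hN hn i i' r r' _ _ hp' hq' g g' h2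
  by_cases hpp : p = p'
  · subst hpp; rfl
  exfalso
  apply hii
  by_cases hc : ecol k p = ecol k p'
  · have hl := lcol_ne k p p' hk hp hp' hpp hc
    apply yv_key k N i i' r r' _ _ (lcol_lt k p hp) (lcol_lt k p' hp') hl hi hi'
    have bd := fun i r c => (yv_bd N i r c hN).2
    have hkN : N ≤ k * N := Nat.le_mul_of_pos_left _ hk
    apply cast_inj_lt (n := n)
    · have := bd i r (lcol k p); have := bd i' r' (lcol k p'); nlinarith
    · have := bd i' r' (lcol k p); have := bd i r (lcol k p'); nlinarith
    · push_cast
      linear_combination b1 - b2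
  · apply yv_key k N i i' r r' _ _ (ecol_lt k p hp) (ecol_lt k p' hp') hc hi hi'
    omega

lemma cover (k N n : ℕ) (hk : 1 ≤ k) (hN : 0 < N) (hn : n = (8 * k + 4) * N + 1) (i : ℕ)
    (x : ZMod n) (hx : x ≠ 0) : ∃ r < N, ∃ p < 4 * k + 2,
      (dif k N (yv N i r) p : ZMod n) = x ∨ -(dif k N (yv N i r) p : ZMod n) = x := by
  have : NeZero n := ⟨by omega⟩
  have hy : ∀ r c, c < 2 * k + 1 → 1 ≤ yv N i r c ∧ yv N i r c ≤ N :=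
    fun r c _ => yv_bd N i r c hN
  have hkN : N ≤ k * N := Nat.le_mul_of_pos_left _ hk
  have hnz : ∀ r p, p < 4 * k + 2 → (dif k N (yv N i r) p : ZMod n) ≠ 0 := by
    intro r p hp h
    have b := dif_bd k N hk _ (hy r) p hp
    have := cast_inj_lt (n := n) (a := dif k N (yv N i r) p) (b := 0) (by nlinarith) (by omega)
      (by simpa using h)
    omega
  let φ : (Fin N × Fin (4 * k + 2)) × Bool → {x : ZMod n // x ≠ 0} := fun a =>
    if a.2 then ⟨(dif k N (yv N i a.1.1) a.1.2 : ZMod n), hnz _ _ a.1.2.2⟩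
    else ⟨-(dif k N (yv N i a.1.1) a.1.2 : ZMod n), neg_ne_zero.mpr (hnz _ _ a.1.2.2)⟩
  have hφ : Function.Injective φ := by
    have base : ∀ (r r' : Fin N) (p p' : Fin (4 * k + 2)),
        (dif k N (yv N i r) p : ZMod n) = dif k N (yv N i r') p' → r = r' ∧ p = p' := by
      intro r r' p p' h
      obtain ⟨h1, h2⟩ := dif_eq k N n hk hN hn _ _ (hy r) (hy r') p p' p.2 p'.2 h
      exact ⟨Fin.ext (yv_inj N i r r' _ r.2 r'.2 h2), Fin.ext h1⟩
    rintro ⟨⟨r, p⟩, b⟩ ⟨⟨r', p'⟩, b'⟩ h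
    have hh := congrArg Subtype.val h
    have nn := dif_ne_neg k N n hk hN hn _ _ (hy r) (hy r') p p' p.2 p'.2
    cases b <;> cases b' <;> simp only [φ, if_true, Bool.false_eq_true, if_false] at hh
    · obtain ⟨rfl, rfl⟩ := base _ _ _ _ (neg_injective hh); rfl
    · exact absurd (by rw [← hh, neg_neg]) nn
    · exact absurd hh nn
    · obtain ⟨rfl, rfl⟩ := base _ _ _ _ hh; rfl
  have hcard : Fintype.card ((Fin N × Fin (4 * k + 2)) × Bool) =
      Fintype.card {x : ZMod n // x ≠ 0} := by
    rw [Fintype.card_subtype_compl, Fintype.card_subtype_eq, ZMod.card]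
    simp only [Fintype.card_prod, Fintype.card_fin, Fintype.card_bool]
    rw [hn, Nat.add_sub_cancel]; ring
  obtain ⟨⟨⟨r, p⟩, b⟩, hb⟩ := ((Fintype.bijective_iff_injective_and_card φ).mpr ⟨hφ, hcard⟩).2 ⟨x, hx⟩
  have hh := congrArg Subtype.val hb
  refine ⟨r, r.2, p, p.2, ?_⟩
  cases b <;> simp only [φ, if_true, Bool.false_eq_true, if_false] at hh
  · exact Or.inr hh
  · exact Or.inl hh

lemma sys_ok (k N n : ℕ) (hk : 1 ≤ k) (hN : 0 < N) (hn : n = (8 * k + 4) * N + 1) (i : ℕ) :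
    IsCycleSystem (4 * k + 2) (sysF k N n i) := by
  have hy : ∀ r c, c < 2 * k + 1 → 1 ≤ yv N i r c ∧ yv N i r c ≤ N :=
    fun r c _ => yv_bd N i r c hN
  have inj : ∀ (r : ℕ) (g : ZMod n), Function.Injective
      (fun p : Fin (4 * k + 2) => (vert k N (yv N i r) p : ZMod n) + g) := by
    intro r g p q h
    have h := cast_inj_lt (hn ▸ vert_lt k N hk _ (hy r) p p.2)
      (hn ▸ vert_lt k N hk _ (hy r) q q.2) (add_right_cancel h)
    rcases Nat.lt_trichotomy (p : ℕ) q with h1 | h1 | h1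
    · exact absurd h (vert_ne k N hk _ (hy r) p q p.2 q.2 h1)
    · exact Fin.ext h1
    · exact absurd h.symm (vert_ne k N hk _ (hy r) q p q.2 p.2 h1)
  refine ⟨?_, ?_, ?_⟩
  · rintro E ⟨r, hr, g, rfl⟩
    exact ⟨_, inj r g, rfl⟩
  · rintro E ⟨r, hr, g, rfl⟩ E' ⟨r', hr', g', rfl⟩ hne
    rw [Finset.disjoint_left]
    intro e he he'
    apply hne
    rw [mem_cyc _ _ _ _ _ hk] at he he'
    obtain ⟨p, hp, rfl⟩ := he
    obtain ⟨q, hq, h⟩ := he'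
    obtain ⟨rfl, a, b⟩ := share k N n hk hN hn i i r r' _ _ hp hq g g' h
    have := yv_inj N i r r' _ hr hr' a
    subst this
    rw [add_left_cancel b]
  · intro e
    constructor
    · induction e using Sym2.ind with
      | _ a b =>
        intro h
        rw [Sym2.mk_isDiag_iff] at h
        obtain ⟨r, hr, p, hp, hd⟩ := cover k N n hk hN hn i (b - a) (by
          intro h'; exact h (sub_eq_zero.mp h').symm)
        rcases hd with hd | hd
        · refine ⟨_, ⟨r, hr, a - (low k N (yv N i r) p : ZMod n), rfl⟩, ?_⟩
          rw [mem_cyc _ _ _ _ _ hk]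
          refine ⟨p, hp, ?_⟩
          rw [hd, Sym2.eq_iff]
          left; constructor <;> ring
        · refine ⟨_, ⟨r, hr, b - (low k N (yv N i r) p : ZMod n), rfl⟩, ?_⟩
          rw [mem_cyc _ _ _ _ _ hk]
          refine ⟨p, hp, ?_⟩
          rw [neg_eq_iff_eq_neg.mp hd, Sym2.eq_iff]
          right; constructor <;> ring
    · rintro ⟨E, ⟨r, hr, g, rfl⟩, he⟩
      unfold cyc cycleEdges at he
      rw [Finset.mem_image] at he
      obtain ⟨p, -, rfl⟩ := he
      rw [Sym2.mk_isDiag_iff]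
      intro h
      have h1 := congrArg Fin.val (inj r g h)
      simp only at h1
      have := p.2
      rcases Nat.lt_or_ge ((p : ℕ) + 1) (4 * k + 2) with h2 | h2
      · rw [Nat.mod_eq_of_lt h2] at h1; omega
      · rw [show (p : ℕ) + 1 = 4 * k + 2 by omega, Nat.mod_self] at h1; omega

lemma sys_cyclic (k N n : ℕ) (i : ℕ) : IsCyclicSystem (sysF k N n i) := by
  rintro E ⟨r, hr, g, rfl⟩ t
  refine ⟨r, hr, g + t, ?_⟩
  unfold translateCycle cyc cycleEdges
  rw [Finset.image_image]
  apply Finset.image_congr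
  intro p _
  simp [add_assoc]

lemma sys_ne (k N n : ℕ) (hk : 1 ≤ k) (hN : 0 < N) (hn : n = (8 * k + 4) * N + 1) (i i' : ℕ)
    (hi : 2 * k * (i + 1) ≤ N) (hi' : 2 * k * (i' + 1) ≤ N)
    (h : sysF k N n i = sysF k N n i') : i = i' := by
  by_contra hii
  have ho := orth k N n hk hN hn i i' hi hi' hii
  have hE : cyc k N n i 0 0 ∈ sysF k N n i := ⟨0, hN, 0, rfl⟩
  have h1 := ho _ hE _ (h ▸ hE)
  rw [Finset.inter_self, Finset.card_le_one] at h1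
  have h2 := h1 _ ((mem_cyc k N n i 0 hk 0 _).mpr ⟨0, by omega, rfl⟩)
    _ ((mem_cyc k N n i 0 hk 0 _).mpr ⟨1, by omega, rfl⟩)
  have h3 := (share k N n hk hN hn i i 0 0 0 1 (by omega) (by omega) 0 0 h2).1
  omega

/-- Theorem: for `k ≥ 1` and `n = (8k+4)N + 1`, there is a set of mutually orthogonal
cyclic `(4k+2)`-cycle systems of `K_n` of cardinality at least
`N/(96k+30) - 1 = (n-1)/((8k+4)(96k+30)) - 1`; in particular
`μ(4k+2,n) ≥ μ'(4k+2,n) ≥ (n-1)/((8k+4)(96k+30)) - 1`. -/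
theorem stmt_13 (k N n : ℕ) (hk : 1 ≤ k) (hN : 0 < N) (hn : n = (8 * k + 4) * N + 1) :
    ∃ S : Set (Set (Finset (Sym2 (ZMod n)))),
      (∀ F ∈ S, IsCycleSystem (4 * k + 2) F ∧ IsCyclicSystem F) ∧
      S.Pairwise Orthog ∧
      ((n : ℝ) - 1) / ((8 * (k : ℝ) + 4) * (96 * (k : ℝ) + 30)) - 1 ≤ S.ncard := by
  classical
  have hk0 : 0 < 2 * k := by omega
  have hb : ∀ i ∈ Finset.range (N / (2 * k)), 2 * k * (i + 1) ≤ N := by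
    intro i hi
    rw [Finset.mem_range] at hi
    calc 2 * k * (i + 1) ≤ 2 * k * (N / (2 * k)) := Nat.mul_le_mul_left _ hi
      _ ≤ N := Nat.mul_div_le _ _
  refine ⟨sysF k N n '' (Finset.range (N / (2 * k)) : Set ℕ), ?_, ?_, ?_⟩
  · rintro F ⟨i, hi, rfl⟩
    exact ⟨sys_ok k N n hk hN hn i, sys_cyclic k N n i⟩
  · rintro F ⟨i, hi, rfl⟩ F' ⟨i', hi', rfl⟩ hne
    exact orth k N n hk hN hn i i' (hb i hi) (hb i' hi') (fun h => hne (by rw [h]))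
  · rw [Set.InjOn.ncard_image, Set.ncard_coe_finset, Finset.card_range]
    · have hkR : (1 : ℝ) ≤ k := by exact_mod_cast hk
      have h1 : N < 2 * k * (N / (2 * k) + 1) := Nat.lt_mul_div_succ N hk0
      have h2 : (N : ℝ) < 2 * k * ((N / (2 * k) : ℕ) + 1) := by exact_mod_cast h1
      generalize (((N / (2 * k) : ℕ)) : ℝ) = t at h2 ⊢
      have hNR : (0 : ℝ) < N := by exact_mod_cast hN
      have ht : 0 < t + 1 := by
        by_contra hc
        nlinarith
      rw [hn]
      push_cast
      rw [sub_le_iff_le_add, div_le_iff₀ (by positivity)]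
      have h3 : (N : ℝ) ≤ (t + 1) * (96 * k + 30) := by nlinarith
      nlinarith
    · intro i hi i' hi' h
      exact sys_ne k N n hk hN hn i i' (hb i hi) (hb i' hi') h
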